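/- Let P be a topological space with a countable base and let {μ_p}_{p∈P} be a family of probability measures on ℝ^d, each absolutely continuous with respect to Lebesgue measure and 1-convex, depending continuously on p, with all supports contained in a single compact set. Then for every q ∈ P and every ε > 0 there exists a neighborhood U of q such that for all p ∈ U, cent μ_q is contained in the open ε-neighborhood of cent μ_p. -/

import Mathlib

open scoped InnerProductSpace ENNReal
open MeasureTheory

/-- The support of a measure `ν` on `ℝ`: the points all of whose open neighborhoods
have positive measure. -/
def msupport (ν : Measure ℝ) : Set ℝ :=
  {t | ∀ U : Set ℝ, IsOpen U → t ∈ U → 0 < ν U}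

/-- A measure `μ` on `ℝ^d` is `1`-convex if for every unit vector `u` the support of
the pushforward of `μ` under `x ↦ ⟪x, u⟫` is connected. -/
def OneConvex {d : ℕ} (μ : Measure (EuclideanSpace ℝ (Fin d))) : Prop :=
  ∀ u : EuclideanSpace ℝ (Fin d), ‖u‖ = 1 →
    IsConnected (msupport (μ.map fun x => ⟪x, u⟫_ℝ))

/-- The set of central points of a measure `μ` on `ℝ^d`: points `x` such that every
closed halfspace containing `x` has `μ`-measure at least `1/(d+1)`. -/
def cent {d : ℕ} (μ : Measure (EuclideanSpace ℝ (Fin d))) :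
    Set (EuclideanSpace ℝ (Fin d)) :=
  {x | ∀ (u : EuclideanSpace ℝ (Fin d)) (c : ℝ), ‖u‖ = 1 → c ≤ ⟪x, u⟫_ℝ →
    1 / ((d : ℝ≥0∞) + 1) ≤ μ {y | c ≤ ⟪y, u⟫_ℝ}}


open Filter Topology Set

/-- hyperplanes are null -/
lemma hyper_null {d : ℕ} (μ : Measure (EuclideanSpace ℝ (Fin d))) (hac : μ ≪ volume)
    (u : EuclideanSpace ℝ (Fin d)) (hu : ‖u‖ = 1) (c : ℝ) :
    μ {y | ⟪y, u⟫_ℝ = c} = 0 := by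
  apply hac
  have hcl : (innerSL ℝ u : EuclideanSpace ℝ (Fin d) →L[ℝ] ℝ) u = 1 := by
    simp [innerSL_apply_apply, hu]
  let s : AffineSubspace ℝ (EuclideanSpace ℝ (Fin d)) :=
    AffineSubspace.mk' (c • u) (LinearMap.ker (innerSL ℝ u : EuclideanSpace ℝ (Fin d) →L[ℝ] ℝ).toLinearMap)
  have hs : (s : Set (EuclideanSpace ℝ (Fin d))) = {y | ⟪y, u⟫_ℝ = c} := by
    ext y
    simp [s, AffineSubspace.mem_mk', real_inner_comm, inner_sub_right, inner_smul_right, hu,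
      sub_eq_zero]
  rw [← hs]
  apply Measure.addHaar_affineSubspace
  intro h
  have h1 : ((c + 1) • u) ∈ (s : Set (EuclideanSpace ℝ (Fin d))) := by rw [h]; simp
  rw [hs] at h1
  simp [inner_smul_left, hu] at h1

lemma le_closed_open {d : ℕ} (μ : Measure (EuclideanSpace ℝ (Fin d))) (hac : μ ≪ volume)
    (u : EuclideanSpace ℝ (Fin d)) (hu : ‖u‖ = 1) (c : ℝ) :
    μ {y | c ≤ ⟪y, u⟫_ℝ} = μ {y | c < ⟪y, u⟫_ℝ} := by
  have hsub : {y | c < ⟪y, u⟫_ℝ} ⊆ {y | c ≤ ⟪y, u⟫_ℝ} := by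
    intro y hy
    simp only [mem_ofPred_eq] at hy ⊢
    exact hy.le
  apply le_antisymm _ (measure_mono hsub)
  calc μ {y | c ≤ ⟪y, u⟫_ℝ} ≤ μ ({y | c < ⟪y, u⟫_ℝ} ∪ {y | ⟪y, u⟫_ℝ = c}) := by
        apply measure_mono
        intro y (hy : c ≤ _)
        rcases hy.lt_or_eq with h | h
        · exact Or.inl h
        · exact Or.inr h.symm
    _ ≤ _ := measure_union_le _ _
    _ = _ := by rw [hyper_null μ hac u hu, add_zero]

lemma cont_inner {d : ℕ} (u : EuclideanSpace ℝ (Fin d)) :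
    Continuous fun y : EuclideanSpace ℝ (Fin d) => ⟪y, u⟫_ℝ := by fun_prop

lemma exists_lower {d : ℕ} (μ : Measure (EuclideanSpace ℝ (Fin d))) (hac : μ ≪ volume)
    (u : EuclideanSpace ℝ (Fin d)) (hu : ‖u‖ = 1) (c : ℝ) (a : ℝ≥0∞)
    (ha : a < μ {y | c ≤ ⟪y, u⟫_ℝ}) : ∃ δ > 0, a < μ {y | c + δ < ⟪y, u⟫_ℝ} := by
  rw [le_closed_open μ hac u hu] at ha
  have hm : Monotone fun n : ℕ => {y | c + 1 / ((n : ℝ) + 1) < ⟪y, u⟫_ℝ} := by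
    intro m n hmn y hy
    simp only [mem_ofPred_eq] at hy ⊢
    have := Nat.one_div_le_one_div (α := ℝ) hmn
    linarith
  have ht := tendsto_measure_iUnion_atTop (μ := μ) hm
  have hU : (⋃ n : ℕ, {y | c + 1 / ((n : ℝ) + 1) < ⟪y, u⟫_ℝ}) = {y | c < ⟪y, u⟫_ℝ} := by
    ext y
    simp only [mem_iUnion, mem_ofPred_eq]
    constructor
    · rintro ⟨n, hn⟩
      have := Nat.one_div_pos_of_nat (α := ℝ) (n := n)
      linarith
    · intro h
      obtain ⟨n, hn⟩ := exists_nat_one_div_lt (sub_pos.2 h)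
      exact ⟨n, by linarith⟩
  rw [hU] at ht
  obtain ⟨n, hn⟩ := (ht.eventually (lt_mem_nhds ha)).exists
  exact ⟨_, Nat.one_div_pos_of_nat, hn⟩

lemma exists_upper {d : ℕ} (μ : Measure (EuclideanSpace ℝ (Fin d))) [IsProbabilityMeasure μ]
    (u : EuclideanSpace ℝ (Fin d)) (c : ℝ) (a : ℝ≥0∞)
    (ha : μ {y | c ≤ ⟪y, u⟫_ℝ} < a) : ∃ δ > 0, μ {y | c - δ < ⟪y, u⟫_ℝ} < a := by
  have hm : Antitone fun n : ℕ => {y | c - 1 / ((n : ℝ) + 1) < ⟪y, u⟫_ℝ} := by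
    intro m n hmn y hy
    simp only [mem_ofPred_eq] at hy ⊢
    have := Nat.one_div_le_one_div (α := ℝ) hmn
    linarith
  have ht := tendsto_measure_iInter_atTop (μ := μ) (fun n : ℕ =>
    (isOpen_lt (continuous_const (y := c - 1 / ((n : ℝ) + 1)))
      (cont_inner u)).measurableSet.nullMeasurableSet) hm ⟨0, measure_ne_top _ _⟩
  have hU : (⋂ n : ℕ, {y | c - 1 / ((n : ℝ) + 1) < ⟪y, u⟫_ℝ}) = {y | c ≤ ⟪y, u⟫_ℝ} := by
    ext y
    simp only [mem_iInter, mem_ofPred_eq]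
    constructor
    · intro h
      by_contra! hlt
      obtain ⟨n, hn⟩ := exists_nat_one_div_lt (sub_pos.2 hlt)
      linarith [h n]
    · intro h n
      have := Nat.one_div_pos_of_nat (α := ℝ) (n := n)
      linarith
  rw [hU] at ht
  obtain ⟨n, hn⟩ := (ht.eventually (gt_mem_nhds ha)).exists
  exact ⟨_, Nat.one_div_pos_of_nat, hn⟩

/-- joint continuity -/
lemma joint_cont {d : ℕ} {P : Type*} [TopologicalSpace P]
    (μ : P → Measure (EuclideanSpace ℝ (Fin d)))
    (hprob : ∀ p, IsProbabilityMeasure (μ p))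
    (hac : ∀ p, μ p ≪ volume)
    (hcont : ∀ U : Set (EuclideanSpace ℝ (Fin d)), IsOpen U →
      Continuous fun p => μ p U)
    (R : ℝ)
    (hsupp : ∀ p, μ p (Metric.closedBall 0 R)ᶜ = 0)
    (q : P) (x u : EuclideanSpace ℝ (Fin d)) (hu : ‖u‖ = 1) :
    Tendsto (fun z : (P × EuclideanSpace ℝ (Fin d)) × EuclideanSpace ℝ (Fin d) =>
      μ z.1.1 {y | ⟪z.1.2, z.2⟫_ℝ ≤ ⟪y, z.2⟫_ℝ}) (𝓝 ((q, x), u))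
      (𝓝 (μ q {y | ⟪x, u⟫_ℝ ≤ ⟪y, u⟫_ℝ})) := by
  -- closeness of halfspaces
  have hclose : ∀ δ > 0, ∀ᶠ z : (P × EuclideanSpace ℝ (Fin d)) × EuclideanSpace ℝ (Fin d) in
      𝓝 ((q, x), u), ∀ y ∈ Metric.closedBall (0 : EuclideanSpace ℝ (Fin d)) R,
        |(⟪y, z.2⟫_ℝ - ⟪z.1.2, z.2⟫_ℝ) - (⟪y, u⟫_ℝ - ⟪x, u⟫_ℝ)| < δ := by
    intro δ hδ
    apply (isCompact_closedBall (0 : EuclideanSpace ℝ (Fin d)) R).eventually_forall_of_forall_eventually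
    intro y _
    have hc : Continuous fun w : ((P × EuclideanSpace ℝ (Fin d)) × EuclideanSpace ℝ (Fin d)) ×
        EuclideanSpace ℝ (Fin d) =>
        |(⟪w.2, w.1.2⟫_ℝ - ⟪w.1.1.2, w.1.2⟫_ℝ) - (⟪w.2, u⟫_ℝ - ⟪x, u⟫_ℝ)| := by fun_prop
    apply hc.continuousAt.eventually (gt_mem_nhds _)
    simpa using hδ
  have hfst : Tendsto (fun z : (P × EuclideanSpace ℝ (Fin d)) × EuclideanSpace ℝ (Fin d) => z.1.1)
      (𝓝 ((q, x), u)) (𝓝 q) := (continuous_fst.comp continuous_fst).tendsto _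
  have hmono : ∀ p (A B : Set (EuclideanSpace ℝ (Fin d))),
      (∀ y ∈ Metric.closedBall (0 : EuclideanSpace ℝ (Fin d)) R, y ∈ A → y ∈ B) →
      μ p A ≤ μ p B := by
    intro p A B h
    calc μ p A ≤ μ p (B ∪ (Metric.closedBall 0 R)ᶜ) := by
          apply measure_mono
          intro y hy
          by_cases hyR : y ∈ Metric.closedBall (0 : EuclideanSpace ℝ (Fin d)) R
          · exact Or.inl (h y hyR hy)
          · exact Or.inr hyR
      _ ≤ _ := measure_union_le _ _
      _ = _ := by rw [hsupp, add_zero]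
  rw [tendsto_order]
  constructor
  · intro a ha
    obtain ⟨δ, hδ, h⟩ := exists_lower (μ q) (hac q) u hu _ a ha
    have h1 := hfst.eventually ((hcont _ (isOpen_lt (continuous_const (y := ⟪x, u⟫_ℝ + δ))
      (cont_inner u))).continuousAt.eventually (lt_mem_nhds h))
    filter_upwards [h1, hclose δ hδ] with z hz1 hz2
    refine hz1.trans_le (hmono _ _ _ fun y hy hyA => ?_)
    have := abs_lt.1 (hz2 y hy)
    simp only [mem_ofPred_eq] at hyA ⊢
    linarith
  · intro a ha
    have := hprob q
    obtain ⟨δ, hδ, h⟩ := exists_upper (μ q) u _ a ha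
    have h1 := hfst.eventually ((hcont _ (isOpen_lt (continuous_const (y := ⟪x, u⟫_ℝ - δ))
      (cont_inner u))).continuousAt.eventually (gt_mem_nhds h))
    filter_upwards [h1, hclose δ hδ] with z hz1 hz2
    refine (hmono _ _ _ fun y hy hyA => ?_).trans_lt hz1
    have := abs_lt.1 (hz2 y hy)
    simp only [mem_ofPred_eq] at hyA ⊢
    linarith

lemma exists_supp (ν : Measure ℝ) (s : Set ℝ) (hs : 0 < ν s) : ∃ t ∈ s, t ∈ msupport ν := by
  by_contra! h
  apply hs.ne'
  apply measure_null_of_locally_null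
  intro x hx
  have := h x hx
  simp only [msupport, mem_ofPred_eq, not_forall, not_lt, nonpos_iff_eq_zero] at this
  obtain ⟨U, hU, hxU, h0⟩ := this
  exact ⟨U, mem_nhdsWithin_of_mem_nhds (hU.mem_nhds hxU), h0⟩

lemma alpha_pos (d : ℕ) : 0 < 1 / ((d : ℝ≥0∞) + 1) := by
  rw [one_div]; apply ENNReal.inv_pos.2
  exact ENNReal.add_ne_top.2 ⟨ENNReal.natCast_ne_top d, ENNReal.one_ne_top⟩

lemma alpha_lt_one (d : ℕ) (hd : d ≠ 0) : 1 / ((d : ℝ≥0∞) + 1) < 1 := by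
  rw [one_div, ENNReal.inv_lt_one]
  have : ((1 : ℕ) : ℝ≥0∞) < ((d + 1 : ℕ) : ℝ≥0∞) := by
    exact_mod_cast (by omega : 1 < d + 1)
  simpa using this

lemma strict {d : ℕ} (hd : d ≠ 0) (μ : Measure (EuclideanSpace ℝ (Fin d)))
    [IsProbabilityMeasure μ] (hconv : OneConvex μ)
    (u : EuclideanSpace ℝ (Fin d)) (hu : ‖u‖ = 1) (a b : ℝ) (hab : a < b)
    (h : 1 / ((d : ℝ≥0∞) + 1) ≤ μ {y | b ≤ ⟪y, u⟫_ℝ}) :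
    1 / ((d : ℝ≥0∞) + 1) < μ {y | a ≤ ⟪y, u⟫_ℝ} := by
  have hmeas : Measurable fun y : EuclideanSpace ℝ (Fin d) => ⟪y, u⟫_ℝ := (cont_inner u).measurable
  by_contra! hcon
  have hlow : 0 < μ {y | ⟪y, u⟫_ℝ < a} := by
    have h1 : {y | ⟪y, u⟫_ℝ < a} = {y | a ≤ ⟪y, u⟫_ℝ}ᶜ := by ext; simp
    rw [h1, prob_compl_eq_one_sub (measurableSet_le measurable_const hmeas)]
    exact tsub_pos_of_lt (hcon.trans_lt (alpha_lt_one d hd))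
  set ν := μ.map fun y => ⟪y, u⟫_ℝ with hν
  obtain ⟨s, hs, hs'⟩ := exists_supp ν (Iio a) (by
    rw [hν, Measure.map_apply hmeas measurableSet_Iio]; exact hlow)
  obtain ⟨t, ht, ht'⟩ := exists_supp ν (Ici b) (by
    rw [hν, Measure.map_apply hmeas measurableSet_Ici]; exact (alpha_pos d).trans_le h)
  have hmid : (a + b) / 2 ∈ msupport ν := by
    refine (hconv u hu).isPreconnected.ordConnected.out hs' ht' ⟨?_, ?_⟩
    · have : s < a := hs
      linarith
    · have : b ≤ t := ht
      linarith
  have hpos := hmid (Ioo a b) isOpen_Ioo ⟨by linarith, by linarith⟩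
  rw [hν, Measure.map_apply hmeas measurableSet_Ioo] at hpos
  have hsum : μ {y | b ≤ ⟪y, u⟫_ℝ} + μ ((fun y => ⟪y, u⟫_ℝ) ⁻¹' Ioo a b) ≤ μ {y | a ≤ ⟪y, u⟫_ℝ} := by
    rw [← measure_union _ (hmeas measurableSet_Ioo)]
    · apply measure_mono
      rintro y (hy | hy)
      · exact hab.le.trans hy
      · exact hy.1.le
    · rw [Set.disjoint_left]
      intro y (hy : b ≤ _) hy2
      exact absurd hy2.2 (not_lt.2 hy)
  have : μ {y | b ≤ ⟪y, u⟫_ℝ} < μ {y | b ≤ ⟪y, u⟫_ℝ} + μ ((fun y => ⟪y, u⟫_ℝ) ⁻¹' Ioo a b) :=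
    ENNReal.lt_add_right (measure_ne_top _ _) hpos.ne'
  exact absurd (h.trans_lt (this.trans_le hsum)) (not_lt.2 hcon)

lemma mem_cent {d : ℕ} (μ : Measure (EuclideanSpace ℝ (Fin d))) (x : EuclideanSpace ℝ (Fin d)) :
    x ∈ cent μ ↔ ∀ u ∈ Metric.sphere (0 : EuclideanSpace ℝ (Fin d)) 1,
      1 / ((d : ℝ≥0∞) + 1) ≤ μ {y | ⟪x, u⟫_ℝ ≤ ⟪y, u⟫_ℝ} := by
  constructor
  · intro h u hu
    exact h u _ (by simpa using hu) le_rfl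
  · intro h u c hu hc
    refine (h u (by simpa using hu)).trans (measure_mono fun y (hy : _ ≤ _) => hc.trans hy)

lemma cent_bdd {d : ℕ} (μ : Measure (EuclideanSpace ℝ (Fin d))) (R : ℝ) (hR : 0 < R)
    (hsupp : μ (Metric.closedBall 0 R)ᶜ = 0) : cent μ ⊆ Metric.closedBall 0 R := by
  intro x hx
  by_contra hxR
  have hxR : R < ‖x‖ := by simpa using hxR
  have hx0 : ‖x‖ ≠ 0 := (hR.trans hxR).ne'
  have h := hx (‖x‖⁻¹ • x) ‖x‖ (by simp [norm_smul, hx0]) (by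
    rw [inner_smul_right, real_inner_self_eq_norm_sq]; field_simp; exact le_rfl)
  have h0 : μ {y | ‖x‖ ≤ ⟪y, ‖x‖⁻¹ • x⟫_ℝ} = 0 := by
    refine measure_mono_null ?_ hsupp
    intro y hy
    simp only [mem_ofPred_eq] at hy
    have := real_inner_le_norm y (‖x‖⁻¹ • x)
    have h1 : ‖‖x‖⁻¹ • x‖ = 1 := by simp [norm_smul, hx0]
    rw [h1, mul_one] at this
    simp only [mem_compl_iff, Metric.mem_closedBall, dist_zero_right, not_le]
    linarith
  rw [h0] at h
  exact absurd h (not_le.2 (alpha_pos d))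

/-- Centre point theorem. -/
lemma cent_nonempty {d : ℕ} (μ : Measure (EuclideanSpace ℝ (Fin d))) [IsProbabilityMeasure μ]
    (R : ℝ) (hsupp : μ (Metric.closedBall 0 R)ᶜ = 0) : (cent μ).Nonempty := by
  let ι := {i : EuclideanSpace ℝ (Fin d) × ℝ // ‖i.1‖ = 1 ∧
    μ {y | i.2 ≤ ⟪y, i.1⟫_ℝ} < 1 / ((d : ℝ≥0∞) + 1)}
  let F : Option ι → Set (EuclideanSpace ℝ (Fin d)) := fun i =>
    match i with
    | none => Metric.closedBall 0 R
    | some i => Metric.closedBall 0 R ∩ {y | ⟪y, i.1.1⟫_ℝ ≤ i.1.2}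
  have hne : (⋂ i, F i).Nonempty := by
    apply Convex.helly_theorem_compact' (𝕜 := ℝ)
    · rintro (_ | i)
      · exact convex_closedBall _ _
      · refine (convex_closedBall _ _).inter ?_
        have := convex_halfSpace_le (f := fun y : EuclideanSpace ℝ (Fin d) => ⟪y, i.1.1⟫_ℝ)
          ⟨fun a b => inner_add_left _ _ _, fun a b => by rw [inner_smul_left]; rfl⟩ i.1.2
        exact this
    · rintro (_ | i)
      · exact isCompact_closedBall _ _
      · exact (isCompact_closedBall _ _).inter_right (isClosed_le (cont_inner _) continuous_const)
    · intro I hI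
      have hlt : ∀ i, μ (F i)ᶜ < 1 / ((d : ℝ≥0∞) + 1) := by
        rintro (_ | i)
        · show μ (Metric.closedBall 0 R)ᶜ < _
          rw [hsupp]; exact alpha_pos d
        · refine lt_of_le_of_lt ?_ i.2.2
          calc μ (F (some i))ᶜ ≤ μ ((Metric.closedBall 0 R)ᶜ ∪ {y | i.1.2 ≤ ⟪y, i.1.1⟫_ℝ}) := by
                apply measure_mono
                intro y hy
                by_cases hyR : y ∈ Metric.closedBall (0 : EuclideanSpace ℝ (Fin d)) R
                · right
                  rw [mem_ofPred_eq]
                  by_contra! hlt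
                  exact hy ⟨hyR, hlt.le⟩
                · exact Or.inl hyR
            _ ≤ _ := measure_union_le _ _
            _ = _ := by rw [hsupp, zero_add]
      rw [finrank_euclideanSpace_fin] at hI
      by_contra hemp
      rw [Set.not_nonempty_iff_eq_empty] at hemp
      have hcov : (⋃ i ∈ I, (F i)ᶜ) = univ := by
        rw [← compl_empty, ← hemp]; simp [compl_iInter]
      have h1 : (1 : ℝ≥0∞) ≤ ∑ i ∈ I, μ (F i)ᶜ := by
        rw [← measure_univ (μ := μ), ← hcov]
        exact measure_biUnion_finset_le _ _
      have hIne : I.Nonempty := by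
        by_contra hIe
        rw [Finset.not_nonempty_iff_eq_empty] at hIe
        simp [hIe] at h1
      have h2 : ∑ i ∈ I, μ (F i)ᶜ < ∑ i ∈ I, 1 / ((d : ℝ≥0∞) + 1) :=
        ENNReal.sum_lt_sum_of_nonempty hIne fun i _ => hlt i
      have h3 : ∑ i ∈ I, 1 / ((d : ℝ≥0∞) + 1) ≤ 1 := by
        rw [Finset.sum_const, nsmul_eq_mul, mul_one_div]
        apply ENNReal.div_le_of_le_mul
        rw [one_mul]
        exact_mod_cast hI
      exact absurd (h1.trans_lt (h2.trans_le h3)) (lt_irrefl _)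
  obtain ⟨x, hx⟩ := hne
  refine ⟨x, fun u c hu hc => ?_⟩
  by_contra! hlt
  obtain ⟨δ, hδ, h⟩ := exists_upper μ u c _ hlt
  have hsub : {y | c - δ / 2 ≤ ⟪y, u⟫_ℝ} ⊆ {y | c - δ < ⟪y, u⟫_ℝ} := by
    intro y hy
    simp only [mem_ofPred_eq] at hy ⊢
    linarith
  have hx1 := mem_iInter.1 hx (some ⟨(u, c - δ / 2), hu, lt_of_le_of_lt (measure_mono hsub) h⟩)
  have : ⟪x, u⟫_ℝ ≤ c - δ / 2 := hx1.2
  linarith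

lemma compact_hull {d : ℕ} (A : Set (EuclideanSpace ℝ (Fin d))) (hA : IsCompact A) :
    IsCompact (convexHull ℝ A) := by
  have him : convexHull ℝ A = (fun p : (Fin (d + 1) → ℝ) × (Fin (d + 1) → EuclideanSpace ℝ (Fin d)) =>
      ∑ i, p.1 i • p.2 i) '' (stdSimplex ℝ (Fin (d + 1)) ×ˢ Set.pi univ fun _ => A) := by
    apply Subset.antisymm
    · intro x hx
      obtain ⟨ι, _, z, w, hz, haff, hw, hsum, hx'⟩ := eq_pos_convex_span_of_mem_convexHull hx
      have hcard : Fintype.card ι ≤ Fintype.card (Fin (d + 1)) := by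
        have h1 := haff.card_le_finrank_succ
        have h2 := Submodule.finrank_le (vectorSpan ℝ (Set.range z))
        rw [finrank_euclideanSpace_fin] at h2
        rw [Fintype.card_fin]; omega
      obtain ⟨e⟩ := Function.Embedding.nonempty_of_card_le hcard
      have hne : Nonempty ι := by
        by_contra h
        rw [not_nonempty_iff] at h
        simp at hsum
      obtain ⟨i0⟩ := hne
      refine ⟨(Function.extend e w 0, Function.extend e z fun _ => z i0), ⟨⟨?_, ?_⟩, ?_⟩, ?_⟩
      · intro j
        by_cases hj : ∃ i, e i = j
        · obtain ⟨i, rfl⟩ := hj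
          simp only [e.injective.extend_apply]; exact (hw i).le
        · simp only [Function.extend_apply' _ _ _ hj]; simp
      · rw [← hsum]
        symm
        apply Fintype.sum_of_injective e e.injective
        · intro j hj
          exact Function.extend_apply' _ _ _ hj
        · intro i; simp [e.injective.extend_apply]
      · intro j _
        by_cases hj : ∃ i, e i = j
        · obtain ⟨i, rfl⟩ := hj
          simp only [e.injective.extend_apply]; exact hz ⟨i, rfl⟩
        · simp only [Function.extend_apply' _ _ _ hj]; exact hz ⟨i0, rfl⟩
      · rw [← hx']
        symm
        apply Fintype.sum_of_injective e e.injective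
        · intro j hj
          simp only [Function.extend_apply' w _ _ hj]; simp
        · intro i; simp [e.injective.extend_apply]
    · rintro _ ⟨⟨w, z⟩, ⟨hw, hz⟩, rfl⟩
      exact (convex_convexHull ℝ A).sum_mem (fun i _ => hw.1 i) hw.2
        (fun i _ => subset_convexHull ℝ A (hz i (mem_univ i)))
  rw [him]
  apply ((isCompact_stdSimplex ℝ (Fin (d + 1))).prod (isCompact_univ_pi fun _ => hA)).image
  fun_prop

/-- continuity for a single measure -/
lemma single_cont {d : ℕ} (μ : Measure (EuclideanSpace ℝ (Fin d))) [IsProbabilityMeasure μ]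
    (hac : μ ≪ volume) (R : ℝ) (hsupp : μ (Metric.closedBall 0 R)ᶜ = 0)
    (x u : EuclideanSpace ℝ (Fin d)) (hu : ‖u‖ = 1) :
    Tendsto (fun z : EuclideanSpace ℝ (Fin d) × EuclideanSpace ℝ (Fin d) =>
      μ {y | ⟪z.1, z.2⟫_ℝ ≤ ⟪y, z.2⟫_ℝ}) (𝓝 (x, u))
      (𝓝 (μ {y | ⟪x, u⟫_ℝ ≤ ⟪y, u⟫_ℝ})) := by
  have h := joint_cont (P := Unit) (fun _ => μ) (fun _ => inferInstance) (fun _ => hac)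
    (fun _ _ => continuous_const) R (fun _ => hsupp) Unit.unit x u hu
  have hc : Continuous fun z : EuclideanSpace ℝ (Fin d) × EuclideanSpace ℝ (Fin d) =>
    ((Unit.unit, z.1), z.2) := by fun_prop
  have h2 := h.comp (hc.tendsto (x, u))
  simp only [Function.comp_def] at h2
  exact h2

lemma cent_closed {d : ℕ} (μ : Measure (EuclideanSpace ℝ (Fin d))) [IsProbabilityMeasure μ]
    (hac : μ ≪ volume) (R : ℝ) (hsupp : μ (Metric.closedBall 0 R)ᶜ = 0) :
    IsClosed (cent μ) := by
  rw [← isOpen_compl_iff, isOpen_iff_mem_nhds]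
  intro x hx
  rw [mem_compl_iff, mem_cent] at hx
  push Not at hx
  obtain ⟨u, hu, hlt⟩ := hx
  have hc : Continuous fun z : EuclideanSpace ℝ (Fin d) => (z, u) := by fun_prop
  have h := (single_cont μ hac R hsupp x u (by simpa using hu)).comp (hc.tendsto x)
  filter_upwards [h.eventually (gt_mem_nhds hlt)] with z hz
  rw [mem_compl_iff, mem_cent]
  intro hcon
  exact absurd (hcon u hu) (not_le.2 hz)

/-- If no point has depth larger than `1/(d+1)`, the central point is unique. -/
lemma cent_unique {d : ℕ} (hd : d ≠ 0) (μ : Measure (EuclideanSpace ℝ (Fin d)))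
    [IsProbabilityMeasure μ] (hac : μ ≪ volume) (hconv : OneConvex μ)
    (R : ℝ) (hsupp : μ (Metric.closedBall 0 R)ᶜ = 0)
    (hno : ¬ ∃ z, ∀ u ∈ Metric.sphere (0 : EuclideanSpace ℝ (Fin d)) 1,
      1 / ((d : ℝ≥0∞) + 1) < μ {y | ⟪z, u⟫_ℝ ≤ ⟪y, u⟫_ℝ})
    (x z : EuclideanSpace ℝ (Fin d)) (hx : x ∈ cent μ) (hz : z ∈ cent μ) : z = x := by
  have hxc := (mem_cent μ x).1 hx
  have hzc := (mem_cent μ z).1 hz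
  set S := Metric.sphere (0 : EuclideanSpace ℝ (Fin d)) 1 with hS
  let A : Set (EuclideanSpace ℝ (Fin d)) :=
    S ∩ {u | μ {y | ⟪x, u⟫_ℝ ≤ ⟪y, u⟫_ℝ} ≤ 1 / ((d : ℝ≥0∞) + 1)}
  have hA : IsCompact A := by
    have hcl : IsClosed A := by
      rw [← isOpen_compl_iff, isOpen_iff_mem_nhds]
      intro u hu
      by_cases huS : u ∈ S
      · have hgt : 1 / ((d : ℝ≥0∞) + 1) < μ {y | ⟪x, u⟫_ℝ ≤ ⟪y, u⟫_ℝ} := by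
          by_contra! hle
          exact hu ⟨huS, hle⟩
        have hc : Continuous fun u : EuclideanSpace ℝ (Fin d) => (x, u) := by fun_prop
        have h := (single_cont μ hac R hsupp x u (by simpa [hS] using huS)).comp (hc.tendsto u)
        filter_upwards [h.eventually (lt_mem_nhds hgt)] with v hv hvA
        exact absurd hvA.2 (not_le.2 hv)
      · filter_upwards [Metric.isClosed_sphere.isOpen_compl.mem_nhds huS] with v hv hvA
        exact hv hvA.1
    exact (isCompact_sphere (0 : EuclideanSpace ℝ (Fin d)) 1).of_isClosed_subset hcl inter_subset_left
  have h0 : (0 : EuclideanSpace ℝ (Fin d)) ∈ convexHull ℝ A := by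
    by_contra h0
    obtain ⟨f, c, hfc, hf0⟩ := geometric_hahn_banach_closed_point (convex_convexHull ℝ A)
      (compact_hull A hA).isClosed h0
    rw [map_zero] at hf0
    let v := (InnerProductSpace.toDual ℝ (EuclideanSpace ℝ (Fin d))).symm f
    have hv : ∀ u, ⟪v, u⟫_ℝ = f u := fun u => by simp [v]
    have hvA : ∀ u ∈ A, ⟪v, u⟫_ℝ < 0 := fun u hu => by
      rw [hv]; exact (hfc u (subset_convexHull ℝ A hu)).trans hf0
    apply hno
    have hev : ∀ᶠ t : ℝ in 𝓝 0, ∀ u ∈ S, (0 < t → u ∈ S →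
        1 / ((d : ℝ≥0∞) + 1) < μ {y | ⟪x + t • v, u⟫_ℝ ≤ ⟪y, u⟫_ℝ}) := by
      apply (isCompact_sphere (0 : EuclideanSpace ℝ (Fin d)) 1).eventually_forall_of_forall_eventually
      intro u hu
      by_cases huA : u ∈ A
      · have hc : Continuous fun p : ℝ × EuclideanSpace ℝ (Fin d) => ⟪v, p.2⟫_ℝ := by fun_prop
        filter_upwards [hc.continuousAt.eventually (gt_mem_nhds (hvA u huA))] with p hp hp1 hp2
        refine strict hd μ hconv p.2 (by simpa [hS] using hp2) _ _ ?_ (hxc p.2 hp2)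
        rw [inner_add_left, real_inner_smul_left]
        nlinarith
      · have hgt : 1 / ((d : ℝ≥0∞) + 1) < μ {y | ⟪x, u⟫_ℝ ≤ ⟪y, u⟫_ℝ} := by
          by_contra! hle
          exact huA ⟨hu, hle⟩
        have hc : Continuous fun p : ℝ × EuclideanSpace ℝ (Fin d) => (x + p.1 • v, p.2) := by
          fun_prop
        have hc' := hc.tendsto (0, u)
        simp only [zero_smul, add_zero] at hc'
        have h := (single_cont μ hac R hsupp x u (by simpa [hS] using hu)).comp hc'
        filter_upwards [h.eventually (lt_mem_nhds hgt)] with p hp _ _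
        exact hp
    have hev2 : ∀ᶠ t : ℝ in 𝓝[>] 0, 0 < t := self_mem_nhdsWithin
    obtain ⟨t, ht, ht0⟩ := ((hev.filter_mono nhdsWithin_le_nhds).and hev2).exists
    exact ⟨x + t • v, fun u hu => ht u hu ht0 hu⟩
  obtain ⟨ι, _, e, w, he, haff, hw, hsum, hcomb⟩ := eq_pos_convex_span_of_mem_convexHull h0
  have hinner : ∀ y : EuclideanSpace ℝ (Fin d), ∑ i, w i * ⟪y, e i⟫_ℝ = 0 := by
    intro y
    have : ⟪y, ∑ i, w i • e i⟫_ℝ = 0 := by rw [hcomb, inner_zero_right]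
    rw [inner_sum] at this
    simpa [real_inner_smul_right] using this
  have hcov : (⋃ i ∈ (Finset.univ : Finset ι), {y | ⟪x, e i⟫_ℝ ≤ ⟪y, e i⟫_ℝ}) = univ := by
    rw [eq_univ_iff_forall]
    intro y
    by_contra hy
    simp only [Finset.mem_univ, iUnion_true, mem_iUnion, mem_ofPred_eq, not_exists, not_le] at hy
    have hne : Nonempty ι := by
      by_contra h
      rw [not_nonempty_iff] at h
      simp at hsum
    have : ∑ i, w i * ⟪y, e i⟫_ℝ < ∑ i, w i * ⟪x, e i⟫_ℝ :=
      Finset.sum_lt_sum_of_nonempty Finset.univ_nonempty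
        fun i _ => mul_lt_mul_of_pos_left (hy i) (hw i)
    rw [hinner, hinner] at this
    exact lt_irrefl _ this
  have h1 : (1 : ℝ≥0∞) ≤ Fintype.card ι * (1 / ((d : ℝ≥0∞) + 1)) := by
    calc (1 : ℝ≥0∞) = μ univ := measure_univ.symm
      _ ≤ ∑ i ∈ (Finset.univ : Finset ι), μ {y | ⟪x, e i⟫_ℝ ≤ ⟪y, e i⟫_ℝ} := by
          rw [← hcov]; exact measure_biUnion_finset_le _ _
      _ ≤ ∑ i ∈ (Finset.univ : Finset ι), 1 / ((d : ℝ≥0∞) + 1) :=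
          Finset.sum_le_sum fun i _ => (he ⟨i, rfl⟩).2
      _ = _ := by simp
  have hge : d + 1 ≤ Fintype.card ι := by
    rw [mul_one_div, ENNReal.le_div_iff_mul_le (by simp) (by simp), one_mul] at h1
    exact_mod_cast h1
  have hcard : Fintype.card ι = Module.finrank ℝ (EuclideanSpace ℝ (Fin d)) + 1 := by
    have h1 := haff.card_le_finrank_succ
    have h2 := Submodule.finrank_le (vectorSpan ℝ (Set.range e))
    rw [finrank_euclideanSpace_fin] at h2 ⊢
    omega
  have htop := haff.vectorSpan_eq_top_of_card_eq_finrank_add_one hcard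
  have hle : ∀ i, ⟪z - x, e i⟫_ℝ ≤ 0 := by
    intro i
    by_contra! hpos
    rw [inner_sub_left, sub_pos] at hpos
    have hiA : e i ∈ A := he ⟨i, rfl⟩
    have := strict hd μ hconv (e i) (by simpa [hS] using hiA.1) _ _ hpos (hzc _ hiA.1)
    exact absurd hiA.2 (not_le.2 this)
  have heq : ∀ i, ⟪z - x, e i⟫_ℝ = 0 := by
    intro i
    have h := (Finset.sum_eq_zero_iff_of_nonpos (s := Finset.univ)
      (f := fun i => w i * ⟪z - x, e i⟫_ℝ)
      (fun i _ => mul_nonpos_of_nonneg_of_nonpos (hw i).le (hle i))).1 (hinner _) i (Finset.mem_univ i)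
    exact (mul_eq_zero.1 h).resolve_left (hw i).ne'
  have hker : vectorSpan ℝ (Set.range e) ≤
      LinearMap.ker (innerSL ℝ (z - x) : EuclideanSpace ℝ (Fin d) →L[ℝ] ℝ).toLinearMap := by
    rw [vectorSpan_def, Submodule.span_le]
    rintro _ ⟨_, ⟨i, rfl⟩, _, ⟨j, rfl⟩, rfl⟩
    simp only [vsub_eq_sub, SetLike.mem_coe, LinearMap.mem_ker, ContinuousLinearMap.coe_coe,
      innerSL_apply_apply, inner_sub_right, heq, sub_self]
  have hmem : z - x ∈ LinearMap.ker
      (innerSL ℝ (z - x) : EuclideanSpace ℝ (Fin d) →L[ℝ] ℝ).toLinearMap := by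
    apply hker; rw [htop]; trivial
  simp only [LinearMap.mem_ker, ContinuousLinearMap.coe_coe, innerSL_apply_apply,
    inner_self_eq_zero] at hmem
  exact sub_eq_zero.1 hmem

/-- A point of depth larger than `1/(d+1)` gives nearby such points. -/
lemma exists_near {d : ℕ} (hd : d ≠ 0) (μ : Measure (EuclideanSpace ℝ (Fin d)))
    [IsProbabilityMeasure μ] (hconv : OneConvex μ)
    (z : EuclideanSpace ℝ (Fin d))
    (hz : ∀ u ∈ Metric.sphere (0 : EuclideanSpace ℝ (Fin d)) 1,
      1 / ((d : ℝ≥0∞) + 1) < μ {y | ⟪z, u⟫_ℝ ≤ ⟪y, u⟫_ℝ})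
    (x : EuclideanSpace ℝ (Fin d)) (hx : x ∈ cent μ) (ε : ℝ) (hε : 0 < ε) :
    ∃ w, dist x w < ε ∧ ∀ u ∈ Metric.sphere (0 : EuclideanSpace ℝ (Fin d)) 1,
      1 / ((d : ℝ≥0∞) + 1) < μ {y | ⟪w, u⟫_ℝ ≤ ⟪y, u⟫_ℝ} := by
  have hc : Continuous fun t : ℝ => dist x (x + t • (z - x)) := by fun_prop
  have hev : ∀ᶠ t : ℝ in 𝓝 0, dist x (x + t • (z - x)) < ε :=
    hc.continuousAt.eventually (gt_mem_nhds (by simpa using hε))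
  have hev2 : ∀ᶠ t : ℝ in 𝓝[>] 0, 0 < t := self_mem_nhdsWithin
  have hev3 : ∀ᶠ t : ℝ in 𝓝 0, t < 1 := gt_mem_nhds one_pos
  obtain ⟨t, ⟨ht, ht1⟩, ht0⟩ := (((hev.and hev3).filter_mono nhdsWithin_le_nhds).and hev2).exists
  refine ⟨_, ht, fun u hu => ?_⟩
  have hin : ⟪x + t • (z - x), u⟫_ℝ = ⟪x, u⟫_ℝ + t * (⟪z, u⟫_ℝ - ⟪x, u⟫_ℝ) := by
    rw [inner_add_left, real_inner_smul_left, inner_sub_left]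
  rcases le_or_gt ⟪x, u⟫_ℝ ⟪z, u⟫_ℝ with h | h
  · have hsub : {y | ⟪z, u⟫_ℝ ≤ ⟪y, u⟫_ℝ} ⊆ {y | ⟪x + t • (z - x), u⟫_ℝ ≤ ⟪y, u⟫_ℝ} := by
      intro y hy
      simp only [mem_ofPred_eq] at hy ⊢
      rw [hin]; nlinarith
    exact (hz u hu).trans_le (measure_mono hsub)
  · refine strict hd μ hconv u (by simpa using hu) _ _ ?_ ((mem_cent μ x).1 hx u hu)
    rw [hin]; nlinarith

/-- Lower semicontinuity of the central point set: for a continuous family of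
`1`-convex absolutely continuous probability measures with supports in a single
compact set, near any parameter `q` the central point set at `q` is contained in the open
`ε`-neighborhood of the central point set at `p`. -/
theorem cent_lower_semicontinuous (d : ℕ) {P : Type*} [TopologicalSpace P]
    [SecondCountableTopology P]
    (μ : P → Measure (EuclideanSpace ℝ (Fin d)))
    (hprob : ∀ p, IsProbabilityMeasure (μ p))
    (hac : ∀ p, μ p ≪ volume)
    (hconv : ∀ p, OneConvex (μ p))
    (hcont : ∀ U : Set (EuclideanSpace ℝ (Fin d)), IsOpen U →
      Continuous fun p => μ p U)
    (K : Set (EuclideanSpace ℝ (Fin d))) (hK : IsCompact K)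
    (hsupp : ∀ p, μ p Kᶜ = 0)
    (q : P) (ε : ℝ) (hε : 0 < ε) :
    ∃ U ∈ nhds q, ∀ p ∈ U, cent (μ q) ⊆ Metric.thickening ε (cent (μ p)) := by
  rcases Nat.eq_zero_or_pos d with rfl | hd'
  · refine ⟨univ, univ_mem, fun p _ x _ => ?_⟩
    apply Metric.self_subset_thickening hε
    intro u c hu
    rw [Subsingleton.elim u 0] at hu
    simp at hu
  have hd : d ≠ 0 := hd'.ne'
  obtain ⟨R, hR, hKR⟩ : ∃ R > 0, K ⊆ Metric.closedBall 0 R := by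
    obtain ⟨R, hR⟩ := hK.isBounded.subset_closedBall (0 : EuclideanSpace ℝ (Fin d))
    exact ⟨max R 1, by positivity, hR.trans (Metric.closedBall_subset_closedBall (le_max_left _ _))⟩
  have hsuppR : ∀ p, μ p (Metric.closedBall 0 R)ᶜ = 0 := fun p =>
    measure_mono_null (compl_subset_compl.2 hKR) (hsupp p)
  have hjoint := joint_cont μ hprob hac hcont R hsuppR
  suffices h : ∀ᶠ p in 𝓝 q, cent (μ q) ⊆ Metric.thickening ε (cent (μ p)) from ⟨_, h, fun p hp => hp⟩
  by_cases hz : ∃ z, ∀ u ∈ Metric.sphere (0 : EuclideanSpace ℝ (Fin d)) 1,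
      1 / ((d : ℝ≥0∞) + 1) < μ q {y | ⟪z, u⟫_ℝ ≤ ⟪y, u⟫_ℝ}
  · obtain ⟨z, hz⟩ := hz
    have hcomp : IsCompact (cent (μ q)) :=
      (isCompact_closedBall (0 : EuclideanSpace ℝ (Fin d)) R).of_isClosed_subset
        (cent_closed (μ q) (hac q) R (hsuppR q)) (cent_bdd (μ q) R hR (hsuppR q))
    apply hcomp.eventually_forall_of_forall_eventually
    intro x hx
    obtain ⟨w, hxw, hw⟩ := exists_near hd (μ q) (hconv q) z hz x hx ε hε
    have h1 : ∀ᶠ p in 𝓝 q, ∀ u ∈ Metric.sphere (0 : EuclideanSpace ℝ (Fin d)) 1,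
        1 / ((d : ℝ≥0∞) + 1) < μ p {y | ⟪w, u⟫_ℝ ≤ ⟪y, u⟫_ℝ} := by
      apply (isCompact_sphere (0 : EuclideanSpace ℝ (Fin d)) 1).eventually_forall_of_forall_eventually
      intro u hu
      have hc : Continuous fun z : P × EuclideanSpace ℝ (Fin d) => ((z.1, w), z.2) := by fun_prop
      exact ((hjoint q w u (by simpa using hu)).comp (hc.tendsto (q, u))).eventually
        (lt_mem_nhds (hw u hu))
    have h2 : ∀ᶠ x' in 𝓝 x, dist x' w < ε := by
      have hc : Continuous fun x' => dist x' w := by fun_prop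
      exact hc.continuousAt.eventually (gt_mem_nhds hxw)
    rw [nhds_prod_eq]
    filter_upwards [h1.prod_mk h2] with a ha
    rw [Metric.mem_thickening_iff]
    exact ⟨w, (mem_cent _ _).2 fun u hu => (ha.1 u hu).le, ha.2⟩
  · obtain ⟨x, hx⟩ := cent_nonempty (μ q) R (hsuppR q)
    have huniq := fun z => cent_unique hd (μ q) (hac q) (hconv q) R (hsuppR q) hz x z hx
    have hC : IsCompact (Metric.closedBall (0 : EuclideanSpace ℝ (Fin d)) R \ Metric.ball x ε) :=
      (isCompact_closedBall _ _).diff Metric.isOpen_ball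
    have hev : ∀ᶠ p in 𝓝 q, ∀ y ∈ Metric.closedBall (0 : EuclideanSpace ℝ (Fin d)) R \ Metric.ball x ε,
        y ∉ cent (μ p) := by
      apply hC.eventually_forall_of_forall_eventually
      intro y hy
      have hyn : y ∉ cent (μ q) := fun h => hy.2 (by rw [huniq y h]; exact Metric.mem_ball_self hε)
      rw [mem_cent] at hyn
      push Not at hyn
      obtain ⟨u, hu, hlt⟩ := hyn
      have hc : Continuous fun z : P × EuclideanSpace ℝ (Fin d) => (z, u) := by fun_prop
      filter_upwards [((hjoint q y u (by simpa using hu)).comp (hc.tendsto (q, y))).eventually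
        (gt_mem_nhds hlt)] with a ha hcon
      exact absurd ((mem_cent _ _).1 hcon u hu) (not_le.2 ha)
    filter_upwards [hev] with p hp y hy
    rw [huniq y hy, Metric.mem_thickening_iff]
    obtain ⟨c, hcp⟩ := cent_nonempty (μ p) R (hsuppR p)
    refine ⟨c, hcp, ?_⟩
    by_contra hfar
    refine hp c ⟨cent_bdd (μ p) R hR (hsuppR p) hcp, fun hb => hfar ?_⟩ hcp
    rw [dist_comm]; exact hb
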